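/- For n ≥ 3, let C_n be the digraph on vertices {1, …, n} consisting of the directed cycle 1→2→⋯→n→1 together with a loop at each vertex, i.e., (i,j) ∈ E(C_n) iff j = i or j ≡ i+1 (mod n). Then l(C_n) = l*(C_n) = w(P(C_n)) = n; in particular, equality l*(D) = w(P(D)) can hold even though the incidence poset P(C_n) has no unique maximal element (its elements form an antichain of size n). -/

import Mathlib

/-- A subtree representation of a digraph with edge relation `E` on vertex type `V`
in a host graph `T` on vertex type `W`: each digraph vertex `v` gets a source set
`src v` and a sink set `snk v`, each inducing a connected (hence nonempty) subgraph
of `T`, such that `E u v` holds iff `src u` meets `snk v`. -/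
structure SubtreeRep {V W : Type} (E : V → V → Prop) (T : SimpleGraph W) where
  src : V → Set W
  snk : V → Set W
  src_connected : ∀ v, (T.induce (src v)).Connected
  snk_connected : ∀ v, (T.induce (snk v)).Connected
  rep : ∀ u v, E u v ↔ (src u ∩ snk v).Nonempty

/-- The set of leaves (vertices of degree 1) of a graph. -/
def treeLeaves {W : Type} (T : SimpleGraph W) : Set W :=
  {w | (T.neighborSet w).ncard = 1}

/-- The leafage of a digraph: the minimum number of leaves of a finite host tree in
which the digraph has a subtree representation. -/
noncomputable def digLeafage {V : Type} (E : V → V → Prop) : ℕ :=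
  sInf {k | ∃ (W : Type) (_ : Fintype W) (T : SimpleGraph W),
    T.IsTree ∧ Nonempty (SubtreeRep E T) ∧ (treeLeaves T).ncard = k}

/-- The catch leafage of a digraph: the minimum number of leaves of a finite host tree
in which the digraph has a subtree representation all of whose sink sets are single
vertices. -/
noncomputable def catchLeafage {V : Type} (E : V → V → Prop) : ℕ :=
  sInf {k | ∃ (W : Type) (_ : Fintype W) (T : SimpleGraph W) (R : SubtreeRep E T),
    T.IsTree ∧ (∀ v, ∃ x, R.snk v = {x}) ∧ (treeLeaves T).ncard = k}

/-- `C` is between `A` and `B` in `T`: `A` and `B` are disjoint and the unique path of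
`T` from `A` to `B` (i.e. the path meeting `A` only at its first vertex and `B` only
at its last vertex) contains a vertex of `C` (possibly an endpoint). -/
def Between {W : Type} (T : SimpleGraph W) (A B C : Set W) : Prop :=
  A ∩ B = ∅ ∧ ∃ (a b : W) (p : T.Walk a b), a ∈ A ∧ b ∈ B ∧ p.IsPath ∧
    (∀ x ∈ p.support, x ∈ A → x = a) ∧ (∀ x ∈ p.support, x ∈ B → x = b) ∧
    ∃ x ∈ C, x ∈ p.support

/-- An asteroidal collection of sets in `T`: pairwise disjoint, and no member is
between two other members. -/
def Asteroidal {W ι : Type} (T : SimpleGraph W) (F : ι → Set W) : Prop :=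
  (∀ i j, i ≠ j → F i ∩ F j = ∅) ∧
  ∀ i j k, i ≠ j → i ≠ k → j ≠ k → ¬ Between T (F i) (F j) (F k)

/-- The star `K_{1,n}`: the center `none` is adjacent to the `n` leaves `some i`. -/
def starGraph (n : ℕ) : SimpleGraph (Option (Fin n)) :=
  SimpleGraph.fromRel (fun a _ => a = none)

/-- A Ferrers digraph: the successor sets are linearly ordered by inclusion. -/
def IsFerrers {V : Type} (F : V → V → Prop) : Prop :=
  ∀ u u' : V, {v | F u v} ⊆ {v | F u' v} ∨ {v | F u' v} ⊆ {v | F u v}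

/-- The Ferrers dimension `f(D)`: the minimum number of Ferrers digraphs whose
intersection is `E`. -/
noncomputable def ferrersDim {V : Type} (E : V → V → Prop) : ℕ :=
  sInf {k | ∃ F : Fin k → V → V → Prop,
    (∀ i, IsFerrers (F i)) ∧ (∀ u v, E u v ↔ ∀ i, F i u v)}

/-- `f*(D)`: the minimum number of pairwise edge-disjoint Ferrers digraphs whose
union is the complement of `E` in `V × V`. -/
noncomputable def fstar {V : Type} (E : V → V → Prop) : ℕ :=
  sInf {k | ∃ F : Fin k → V → V → Prop,
    (∀ i, IsFerrers (F i)) ∧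
    (∀ i j, i ≠ j → ∀ u v, ¬ (F i u v ∧ F j u v)) ∧
    (∀ u v, ¬ E u v ↔ ∃ i, F i u v)}

/-- The width of the incidence poset `P(D)`: the maximum size of an antichain (under
inclusion) of predecessor sets of the digraph `E`. -/
noncomputable def incWidth {V : Type} (E : V → V → Prop) : ℕ :=
  sSup {k | ∃ A : Finset (Set V),
    (↑A : Set (Set V)) ⊆ Set.range (fun v => {u | E u v}) ∧
    IsAntichain (· ⊆ ·) (↑A : Set (Set V)) ∧ A.card = k}

/-- The digraph `D_n` with adjacency matrix `J - I`: all pairs of distinct vertices. -/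
def DnRel (n : ℕ) (i j : Fin n) : Prop := i ≠ j

/-- The digraph `E_n` with adjacency matrix `[[I, Y], [Yᵀ, 0]]` (vertex `n-1` playing
the role of the last row/column). -/
def EnRel (n : ℕ) (i j : Fin n) : Prop :=
  (i.val < n - 1 ∧ j.val < n - 1 ∧ i = j) ∨
  (i.val < n - 1 ∧ j.val = n - 1) ∨
  (i.val = n - 1 ∧ j.val < n - 1)

/-- The digraph `C_n`: a directed `n`-cycle plus a loop at each vertex. -/
def CnRel (n : ℕ) (i j : Fin n) : Prop := j = i ∨ j.val = (i.val + 1) % n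

/-- The digraph `M_{k,m}` on `Fin k × Fin m`: identity diagonal blocks, all-ones
blocks above the diagonal, all-zeros blocks below. -/
def MkmRel (k m : ℕ) (p q : Fin k × Fin m) : Prop :=
  p.1 < q.1 ∨ (p.1 = q.1 ∧ p.2 = q.2)

/-- The digraph `F_n` with adjacency matrix `[[I, Y], [Yᵀ, 1]]` (vertex `n-1` playing
the role of the last row/column). -/
def FnRel (n : ℕ) (i j : Fin n) : Prop := i = j ∨ i.val = n - 1 ∨ j.val = n - 1

/-- The digraph `P_n`: a directed path `1 → 2 → ⋯ → n` plus a loop at each vertex. -/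
def PnRel (n : ℕ) (i j : Fin n) : Prop := j = i ∨ j.val = i.val + 1

section TreeGeometry

variable {W : Type} {T : SimpleGraph W}

/-- A vertex set is path-convex if it contains every path between two of its members. -/
def PathConvex (T : SimpleGraph W) (A : Set W) : Prop :=
  ∀ x ∈ A, ∀ y ∈ A, ∀ p : T.Walk x y, p.IsPath → ∀ w ∈ p.support, w ∈ A

theorem SimpleGraph.IsAcyclic.eq_bypass [DecidableEq W] (hT : T.IsAcyclic) {x y : W}
    {p : T.Walk x y}
    (hp : p.IsPath) (q : T.Walk x y) : p = q.bypass :=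
  congrArg Subtype.val ((hT.subsingleton_path x y).elim ⟨p, hp⟩ ⟨q.bypass, q.bypass_isPath⟩)

theorem SimpleGraph.IsAcyclic.support_subset_of_isPath (hT : T.IsAcyclic) {x y : W} {p : T.Walk x y}
    (hp : p.IsPath) (q : T.Walk x y) : p.support ⊆ q.support := by
  classical
  rw [hT.eq_bypass hp q]
  exact q.support_bypass_subset_support

theorem SimpleGraph.IsAcyclic.edges_subset_of_isPath (hT : T.IsAcyclic) {x y : W} {p : T.Walk x y}
    (hp : p.IsPath) (q : T.Walk x y) : p.edges ⊆ q.edges := by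
  classical
  rw [hT.eq_bypass hp q]
  exact q.edges_bypass_subset_edges

theorem PathConvex.of_induce_connected (hT : T.IsAcyclic) {A : Set W}
    (hA : (T.induce A).Connected) : PathConvex T A := by
  intro x hx y hy p hp w hw
  obtain ⟨q⟩ := hA.preconnected ⟨x, hx⟩ ⟨y, hy⟩
  have hq : ∀ v ∈ (q.map (SimpleGraph.Embedding.induce A).toHom).support, v ∈ A := by
    intro v hv
    rw [SimpleGraph.Walk.support_map, List.mem_map] at hv
    obtain ⟨z, -, rfl⟩ := hv
    exact z.2
  exact hq w (hT.support_subset_of_isPath hp (q.map (SimpleGraph.Embedding.induce A).toHom) hw)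

theorem PathConvex.union (hT : T.IsTree) {A B : Set W} (hA : PathConvex T A)
    (hB : PathConvex T B) (hAB : (A ∩ B).Nonempty) : PathConvex T (A ∪ B) := by
  obtain ⟨z, hzA, hzB⟩ := hAB
  have key : ∀ x ∈ A ∪ B, ∃ p : T.Walk x z, ∀ w ∈ p.support, w ∈ A ∪ B := by
    intro x hx
    obtain ⟨p, hp⟩ := hT.connected.exists_isPath x z
    rcases hx with hx | hx
    · exact ⟨p, fun w hw => Or.inl (hA x hx z hzA p hp w hw)⟩
    · exact ⟨p, fun w hw => Or.inr (hB x hx z hzB p hp w hw)⟩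
  intro x hx y hy p hp w hw
  obtain ⟨q, hq⟩ := key x hx
  obtain ⟨r, hr⟩ := key y hy
  have hw' := hT.isAcyclic.support_subset_of_isPath hp (q.append r.reverse) hw
  rw [SimpleGraph.Walk.mem_support_append_iff, SimpleGraph.Walk.support_reverse,
    List.mem_reverse] at hw'
  exact hw'.elim (hq w) (hr w)

theorem PathConvex.pair (hT : T.IsAcyclic) {x y : W} (hxy : T.Adj x y) :
    PathConvex T {x, y} := by
  have key : ∀ u ∈ ({x, y} : Set W), ∀ v ∈ ({x, y} : Set W),
      ∃ p : T.Walk u v, ∀ w ∈ p.support, w ∈ ({x, y} : Set W) := by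
    rintro u (rfl | rfl) v (rfl | rfl)
    · exact ⟨.nil, by simp⟩
    · exact ⟨.cons hxy .nil, by simp⟩
    · exact ⟨.cons hxy.symm .nil, by simp⟩
    · exact ⟨.nil, by simp⟩
  intro u hu v hv p hp w hw
  obtain ⟨q, hq⟩ := key u hu v hv
  exact hq w (hT.support_subset_of_isPath hp q hw)

/-- The Helly property for three path-convex sets of a tree. -/
theorem PathConvex.helly (hT : T.IsTree) {A B C : Set W} (hA : PathConvex T A)
    (hB : PathConvex T B) (hC : PathConvex T C) (hAB : (A ∩ B).Nonempty)
    (hBC : (B ∩ C).Nonempty) (hAC : (A ∩ C).Nonempty) : ∃ w, w ∈ A ∧ w ∈ B ∧ w ∈ C := by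
  obtain ⟨x, hxA, hxB⟩ := hAB
  obtain ⟨y, hyB, hyC⟩ := hBC
  obtain ⟨z, hzA, hzC⟩ := hAC
  by_cases hyA : y ∈ A
  · exact ⟨y, hyA, hyB, hyC⟩
  obtain ⟨p, hp⟩ := hT.connected.exists_isPath x y
  obtain ⟨q, hq⟩ := hT.connected.exists_isPath x z
  obtain ⟨r, hr⟩ := hT.connected.exists_isPath z y
  obtain ⟨d, hd, hdA, hdnA⟩ := p.exists_boundary_dart A hxA hyA
  have hde : s(d.fst, d.snd) ∈ (q.append r).edges :=
    hT.isAcyclic.edges_subset_of_isPath hp _ (List.mem_map_of_mem hd)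
  rw [SimpleGraph.Walk.edges_append, List.mem_append] at hde
  refine ⟨d.fst, hdA, hB x hxB y hyB p hp _ (p.dart_fst_mem_support_of_mem_darts hd), ?_⟩
  rcases hde with h | h
  · exact absurd (hA x hxA z hzA q hq _ (q.snd_mem_support_of_mem_edges h)) hdnA
  · exact hC z hzC y hyC r hr _ (r.fst_mem_support_of_mem_edges h)

/-- Four path-convex sets of a tree that meet cyclically have a meeting opposite pair. -/
theorem PathConvex.meet_of_cycle_four (hT : T.IsTree) {A B C D : Set W} (hA : PathConvex T A)
    (hB : PathConvex T B) (hC : PathConvex T C) (hD : PathConvex T D)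
    (hAB : (A ∩ B).Nonempty) (hBC : (B ∩ C).Nonempty) (hCD : (C ∩ D).Nonempty)
    (hDA : (D ∩ A).Nonempty) : (A ∩ C).Nonempty ∨ (B ∩ D).Nonempty := by
  obtain ⟨w, hwB, hwCD, hwAD⟩ := hB.helly hT (hC.union hT hD hCD)
    (hA.union hT hD (by rwa [Set.inter_comm]))
    (hBC.mono (by grind)) (hCD.mono (by grind)) (hAB.mono (by grind))
  by_cases hwD : w ∈ D
  · exact Or.inr ⟨w, hwB, hwD⟩
  · exact Or.inl ⟨w, hwAD.resolve_right hwD, hwCD.resolve_right hwD⟩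

theorem PathConvex.adj_mem_or (hT : T.IsTree) {A B : Set W} (hA : PathConvex T A)
    (hB : PathConvex T B) (hAB : (A ∩ B).Nonempty) {x y : W} (hxy : T.Adj x y)
    (hx : x ∈ A ∪ B) (hy : y ∈ A ∪ B) : x ∈ A ∧ y ∈ A ∨ x ∈ B ∧ y ∈ B := by
  by_contra hcon
  obtain ⟨w, hwA, hwB, hw⟩ := hA.helly hT hB (PathConvex.pair hT.isAcyclic hxy) hAB
    (by by_cases h : x ∈ B
        · exact ⟨x, h, by simp⟩
        · exact ⟨y, by grind, by simp⟩)
    (by by_cases h : x ∈ A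
        · exact ⟨x, h, by simp⟩
        · exact ⟨y, by grind, by simp⟩)
  grind

theorem PathConvex.iUnion_Icc (hT : T.IsTree) {C : ℤ → Set W} (hC : ∀ k, PathConvex T (C k))
    (hmeet : ∀ k, (C k ∩ C (k + 1)).Nonempty) {a b : ℤ} (hab : a ≤ b) :
    PathConvex T {w | ∃ k ∈ Set.Icc a b, w ∈ C k} ∧
    ∀ x y, T.Adj x y → (∃ k ∈ Set.Icc a b, x ∈ C k) → (∃ k ∈ Set.Icc a b, y ∈ C k) →
      ∃ k ∈ Set.Icc a b, x ∈ C k ∧ y ∈ C k := by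
  induction b, hab using Int.leInduction with
  | base =>
    have hset : {w | ∃ k ∈ Set.Icc a a, w ∈ C k} = C a := by ext; simp
    refine ⟨hset ▸ hC a, fun x y _ hx hy => ?_⟩
    simp only [Set.Icc_self, Set.mem_singleton_iff, exists_eq_left] at *
    exact ⟨hx, hy⟩
  | succ b hab ih =>
    have hset : {w | ∃ k ∈ Set.Icc a (b + 1), w ∈ C k} =
        {w | ∃ k ∈ Set.Icc a b, w ∈ C k} ∪ C (b + 1) := by
      ext w
      constructor
      · rintro ⟨k, hk, hw⟩
        rcases eq_or_ne k (b + 1) with rfl | hne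
        · exact Or.inr hw
        · exact Or.inl ⟨k, ⟨hk.1, by have := hk.2; lia⟩, hw⟩
      · rintro (⟨k, hk, hw⟩ | hw)
        · exact ⟨k, ⟨hk.1, by have := hk.2; lia⟩, hw⟩
        · exact ⟨b + 1, ⟨by lia, le_rfl⟩, hw⟩
    have hinter : ({w | ∃ k ∈ Set.Icc a b, w ∈ C k} ∩ C (b + 1)).Nonempty := by
      obtain ⟨w, hw, hw'⟩ := hmeet b
      exact ⟨w, ⟨b, ⟨hab, le_rfl⟩, hw⟩, hw'⟩
    refine ⟨hset ▸ ih.1.union hT (hC _) hinter, fun x y hxy hx hy => ?_⟩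
    have hx' : x ∈ {w | ∃ k ∈ Set.Icc a (b + 1), w ∈ C k} := hx
    have hy' : y ∈ {w | ∃ k ∈ Set.Icc a (b + 1), w ∈ C k} := hy
    rw [hset] at hx' hy'
    rcases ih.1.adj_mem_or hT (hC _) hinter hxy hx' hy' with ⟨h₁, h₂⟩ | ⟨h₁, h₂⟩
    · obtain ⟨k, hk, h⟩ := ih.2 x y hxy h₁ h₂
      exact ⟨k, ⟨hk.1, by have := hk.2; lia⟩, h⟩
    · exact ⟨b + 1, ⟨by lia, le_rfl⟩, h₁, h₂⟩

/-- A vertex outside a path-convex set separates that set from some leaf. -/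
theorem PathConvex.exists_leaf (hT : T.IsTree) [Finite W] {Z : Set W} (hZ : PathConvex T Z)
    {x : W} (hx : x ∉ Z) (hne : Z.Nonempty) :
    ∃ l ∈ treeLeaves T, ∀ z ∈ Z, ∀ p : T.Walk l z, x ∈ p.support := by
  obtain ⟨z₀, hz₀⟩ := hne
  choose f hf using fun l => hT.connected.exists_isPath l z₀
  obtain ⟨l, hl, hmax⟩ := Set.exists_max_image {l | x ∈ (f l).support}
    (fun l => (f l).length) (Set.toFinite _) ⟨x, (f x).start_mem_support⟩
  have hsep : ∀ m, x ∈ (f m).support → ∀ p : T.Walk m z₀, x ∈ p.support := fun m hm p =>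
    hT.isAcyclic.support_subset_of_isPath (hf m) p hm
  refine ⟨l, ?_, fun z hz p => ?_⟩
  · have hlz : l ≠ z₀ := by
      rintro rfl
      have := hsep l hl .nil
      simp only [SimpleGraph.Walk.support_nil, List.mem_singleton] at this
      exact hx (this ▸ hz₀)
    refine Set.ncard_eq_one.2 ⟨(f l).snd, Set.eq_singleton_iff_unique_mem.2
      ⟨(f l).adj_snd (SimpleGraph.Walk.not_nil_of_ne hlz), fun m hm => ?_⟩⟩
    have hm : T.Adj l m := hm
    by_cases hmem : m ∈ (f l).support
    · exact hT.isAcyclic.eq_snd_of_adj_start (hf l) hm hmem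
    · have hpath : (SimpleGraph.Walk.cons hm.symm (f l)).IsPath := (hf l).cons hmem
      have heq : f m = .cons hm.symm (f l) :=
        congrArg Subtype.val ((hT.isAcyclic.subsingleton_path m z₀).elim ⟨f m, hf m⟩ ⟨_, hpath⟩)
      have hlt := hmax m (by
        change x ∈ (f m).support
        rw [heq, SimpleGraph.Walk.support_cons]
        exact List.mem_cons_of_mem _ hl)
      rw [heq, SimpleGraph.Walk.length_cons] at hlt
      lia
  · obtain ⟨q, hq⟩ := hT.connected.exists_isPath z z₀
    have h := hsep l hl (p.append q)
    rw [SimpleGraph.Walk.mem_support_append_iff] at h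
    exact h.resolve_right fun h => hx (hZ z hz z₀ hz₀ q hq x h)

/-- If each of the points `x k` is avoided by a path-convex set containing all the others,
then the tree has at least as many leaves as there are points. -/
theorem card_le_ncard_treeLeaves (hT : T.IsTree) [Finite W] {n : ℕ} (hn : 2 ≤ n)
    (x : Fin n → W)
    (hx : ∀ k, ∃ Z, PathConvex T Z ∧ x k ∉ Z ∧ ∀ j, j ≠ k → x j ∈ Z) :
    n ≤ (treeLeaves T).ncard := by
  have hl : ∀ k, ∃ l ∈ treeLeaves T, ∀ j, j ≠ k → x j ≠ x k ∧
      ∀ p : T.Walk l (x j), x k ∈ p.support := by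
    intro k
    obtain ⟨Z, hZ, hk, hj⟩ := hx k
    have : Nontrivial (Fin n) := Fin.nontrivial_iff_two_le.2 hn
    obtain ⟨j, hjk⟩ := exists_ne k
    obtain ⟨l, hl, hsep⟩ := hZ.exists_leaf hT hk ⟨_, hj j hjk⟩
    exact ⟨l, hl, fun i hi => ⟨fun h => hk (h ▸ hj i hi), hsep _ (hj i hi)⟩⟩
  choose l hleaf hsep using hl
  have hinj : Function.Injective l := by
    classical
    intro j k hjk
    by_contra hne
    obtain ⟨hxne, hk⟩ := hsep k j hne
    have hj := (hsep j k (Ne.symm hne)).2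
    obtain ⟨p, hp⟩ := hT.connected.exists_isPath (l k) (x j)
    have hmem := hk p
    have := hjk ▸ hj
    exact SimpleGraph.Walk.endpoint_notMem_support_takeUntil hp hmem hxne
      (this (p.takeUntil _ hmem))
  calc n = (Set.range l).ncard := by
        rw [← Set.image_univ, Set.ncard_image_of_injective _ hinj, Set.ncard_univ, Nat.card_fin]
    _ ≤ _ := Set.ncard_le_ncard (Set.range_subset_iff.2 hleaf) (Set.toFinite _)

end TreeGeometry

section CyclicSystem

variable {W : Type} {T : SimpleGraph W}

/-- A subtree representation of the `n`-cycle with loops, with indices unrolled to `ℤ`. -/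
structure CyclicSystem (T : SimpleGraph W) (n : ℤ) (s t : ℤ → Set W) : Prop where
  three_le : 3 ≤ n
  convex_src : ∀ i, PathConvex T (s i)
  convex_snk : ∀ i, PathConvex T (t i)
  periodic_src : Function.Periodic s n
  periodic_snk : Function.Periodic t n
  meet_iff : ∀ i j, (s i ∩ t j).Nonempty ↔ n ∣ j - i ∨ n ∣ j - i - 1

namespace CyclicSystem

variable {n : ℤ} {s t : ℤ → Set W}

theorem reverse (h : CyclicSystem T n s t) :
    CyclicSystem T n (fun i => t (-i)) (fun i => s (-i)) where
  three_le := h.three_le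
  convex_src i := h.convex_snk _
  convex_snk i := h.convex_src _
  periodic_src i := by
    change t (-(i + n)) = t (-i)
    rw [← h.periodic_snk]
    congr 1
    ring
  periodic_snk i := by
    change s (-(i + n)) = s (-i)
    rw [← h.periodic_src]
    congr 1
    ring
  meet_iff i j := by
    rw [Set.inter_comm, h.meet_iff]
    ring_nf

theorem meet_self (h : CyclicSystem T n s t) (i : ℤ) : (s i ∩ t i).Nonempty :=
  (h.meet_iff i i).2 (Or.inl (by simp))

theorem meet_succ (h : CyclicSystem T n s t) (i : ℤ) : (s i ∩ t (i + 1)).Nonempty :=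
  (h.meet_iff i (i + 1)).2 (Or.inr (by simp))

/-- Within one period, `s i` and `t j` share a point only in the expected cases. -/
theorem eq_of_mem (h : CyclicSystem T n s t) {i j : ℤ} {w : W} (hi : w ∈ s i) (hj : w ∈ t j)
    (h₁ : -n ≤ j - i) (h₂ : j - i < n) :
    j = i ∨ j = i + 1 ∨ j = i - n ∨ j = i - n + 1 := by
  have hdvd : ∀ d : ℤ, n ∣ d → -n - 1 ≤ d → d < n → d = 0 ∨ d = -n := by
    rintro d ⟨c, rfl⟩ h₁ h₂
    have hn := h.three_le
    have hc₁ : c < 1 := by by_contra! hc; nlinarith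
    have hc₂ : -2 < c := by by_contra! hc; nlinarith
    obtain rfl | rfl : c = 0 ∨ c = -1 := by lia
    · simp
    · simp
  rcases (h.meet_iff i j).1 ⟨w, hi, hj⟩ with hd | hd
  · have := hdvd _ hd (by lia) (by lia)
    lia
  · have := hdvd _ hd (by lia) (by lia)
    lia

theorem chain (h : CyclicSystem T n s t) (hT : T.IsTree) {e : ℤ} (he : e = 0 ∨ e = 1)
    {a b : ℤ} (hab : a ≤ b) :
    PathConvex T {w | ∃ k ∈ Set.Icc a b, w ∈ s k ∪ t (k + e)} ∧
    ∀ x y, T.Adj x y → (∃ k ∈ Set.Icc a b, x ∈ s k ∪ t (k + e)) →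
      (∃ k ∈ Set.Icc a b, y ∈ s k ∪ t (k + e)) →
      ∃ k ∈ Set.Icc a b, x ∈ s k ∧ y ∈ s k ∨ x ∈ t (k + e) ∧ y ∈ t (k + e) := by
  have hmeet : ∀ k, (s k ∩ t (k + e)).Nonempty := by
    intro k
    rcases he with rfl | rfl
    · simpa using h.meet_self k
    · exact h.meet_succ k
  have hnext : ∀ k, ((s k ∪ t (k + e)) ∩ (s (k + 1) ∪ t (k + 1 + e))).Nonempty := by
    intro k
    rcases he with rfl | rfl
    · obtain ⟨w, hw, hw'⟩ := h.meet_succ k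
      exact ⟨w, Or.inl hw, Or.inr (by simpa using hw')⟩
    · obtain ⟨w, hw, hw'⟩ := h.meet_self (k + 1)
      exact ⟨w, Or.inr hw', Or.inl hw⟩
  have hconv : ∀ k, PathConvex T (s k ∪ t (k + e)) := fun k =>
    (h.convex_src k).union hT (h.convex_snk _) (hmeet k)
  obtain ⟨h₁, h₂⟩ := PathConvex.iUnion_Icc hT hconv hnext hab
  refine ⟨h₁, fun x y hxy hx hy => ?_⟩
  obtain ⟨k, hk, hkx, hky⟩ := h₂ x y hxy hx hy
  exact ⟨k, hk, (h.convex_src k).adj_mem_or hT (h.convex_snk _) (hmeet k) hxy hkx hky⟩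

theorem not_disjoint_src_and_disjoint_snk (h : CyclicSystem T n s t) (hT : T.IsTree) {a b : ℤ}
    (hab : a < b) (hba : b ≤ a + n) (hs : ¬ (s a ∩ s (a + 1)).Nonempty)
    (ht : ¬ (t b ∩ t (b + 1)).Nonempty) : False := by
  have hn := h.three_le
  have hsa : s (a + n) = s a := h.periodic_src a
  have hta : t (a + n + 1) = t (a + 1) := by
    rw [add_right_comm]
    exact h.periodic_snk (a + 1)
  set L : Set W := {w | ∃ k ∈ Set.Icc (a + 1) (b - 1), w ∈ s k ∪ t (k + 1)}
  set R : Set W := {w | ∃ k ∈ Set.Icc (b + 1) (a + n), w ∈ s k ∪ t (k + 0)}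
  have hLconv : a + 1 < b → PathConvex T L := fun hlt => (h.chain hT (Or.inr rfl) (by lia)).1
  have hRconv : b < a + n → PathConvex T R := fun hlt => (h.chain hT (Or.inl rfl) (by lia)).1
  have hLt : a + 1 < b → (t (a + 1) ∩ L).Nonempty := fun hlt => by
    obtain ⟨w, hw, hw'⟩ := h.meet_self (a + 1)
    exact ⟨w, hw', a + 1, ⟨le_rfl, by lia⟩, Or.inl hw⟩
  have hLs : a + 1 < b → (L ∩ s b).Nonempty := fun hlt => by
    obtain ⟨w, hw, hw'⟩ := h.meet_self b
    exact ⟨w, ⟨b - 1, ⟨by lia, le_rfl⟩, Or.inr (by simpa using hw')⟩, hw⟩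
  have hRt : b < a + n → (t (a + 1) ∩ R).Nonempty := fun hlt => by
    obtain ⟨w, hw, hw'⟩ := h.meet_succ a
    exact ⟨w, hw', a + n, ⟨by lia, le_rfl⟩, Or.inl (by rwa [hsa])⟩
  have hRs : b < a + n → (R ∩ s b).Nonempty := fun hlt => by
    obtain ⟨w, hw, hw'⟩ := h.meet_succ b
    exact ⟨w, ⟨b + 1, ⟨le_rfl, by lia⟩, Or.inr (by simpa using hw')⟩, hw⟩
  have srcL : ∀ w, ∀ k ∈ Set.Icc (a + 1) (b - 1), w ∈ s k → w ∈ t (a + 1) → w ∈ s (a + 1) := by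
    rintro w k ⟨h₁, h₂⟩ hk hw
    have := h.eq_of_mem hk hw (by lia) (by lia)
    rwa [show a + 1 = k by lia]
  have srcR : ∀ w, ∀ k ∈ Set.Icc (b + 1) (a + n), w ∈ s k → w ∈ t (a + 1) → w ∈ s a := by
    rintro w k ⟨h₁, h₂⟩ hk hw
    have := h.eq_of_mem hk hw (by lia) (by lia)
    rwa [← hsa, show a + n = k by lia]
  have snkL : ∀ w, ∀ k ∈ Set.Icc (a + 1) (b - 1), w ∈ t (k + 1) → w ∈ s b → w ∈ t b := by
    rintro w k ⟨h₁, h₂⟩ hk hw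
    have := h.eq_of_mem hw hk (by lia) (by lia)
    rwa [show b = k + 1 by lia]
  have snkR : ∀ w, ∀ k ∈ Set.Icc (b + 1) (a + n), w ∈ t (k + 0) → w ∈ s b → w ∈ t (b + 1) := by
    rintro w k ⟨h₁, h₂⟩ hk hw
    have := h.eq_of_mem hw hk (by lia) (by lia)
    rwa [show b + 1 = k + 0 by lia]
  have srcL_snkR : ∀ w, ∀ k ∈ Set.Icc (a + 1) (b - 1), ∀ l ∈ Set.Icc (b + 1) (a + n),
      w ∈ s k → w ∉ t (l + 0) := by
    rintro w k ⟨h₁, h₂⟩ l ⟨h₃, h₄⟩ hk hl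
    have := h.eq_of_mem hk hl (by lia) (by lia)
    lia
  have snkL_srcR : ∀ w, ∀ k ∈ Set.Icc (a + 1) (b - 1), ∀ l ∈ Set.Icc (b + 1) (a + n),
      w ∈ t (k + 1) → w ∉ s l := by
    rintro w k ⟨h₁, h₂⟩ l ⟨h₃, h₄⟩ hk hl
    have := h.eq_of_mem hl hk (by lia) (by lia)
    lia
  rcases eq_or_lt_of_le (show a + 1 ≤ b by lia) with rfl | hlt
  · obtain ⟨w, hwt, hwR, hws⟩ := (h.convex_snk (a + 1)).helly hT (hRconv (by lia))
      (h.convex_src (a + 1)) (hRt (by lia)) (hRs (by lia))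
      (by rw [Set.inter_comm]; exact h.meet_self _)
    obtain ⟨k, hk, hw | hw⟩ := hwR
    · exact hs ⟨w, srcR w k hk hw hwt, hws⟩
    · exact ht ⟨w, hwt, snkR w k hk hw hws⟩
  rcases eq_or_lt_of_le hba with rfl | hlt'
  · obtain ⟨w, hwt, hwL, hws⟩ := (h.convex_snk (a + 1)).helly hT (hLconv hlt)
      (h.convex_src (a + n)) (hLt hlt) (hLs hlt)
      (by rw [Set.inter_comm, hsa]; exact h.meet_succ _)
    obtain ⟨k, hk, hw | hw⟩ := hwL
    · exact hs ⟨w, hsa ▸ hws, srcL w k hk hw hwt⟩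
    · exact ht ⟨w, snkL w k hk hw hws, hta.symm ▸ hwt⟩
  have hLR : (L ∩ R).Nonempty := by
    refine ((hLconv hlt).meet_of_cycle_four hT (h.convex_src b) (hRconv hlt')
      (h.convex_snk (a + 1)) (hLs hlt) ?_ ?_ (hLt hlt)).resolve_right ?_
    · rw [Set.inter_comm]
      exact hRs hlt'
    · rw [Set.inter_comm]
      exact hRt hlt'
    · rintro ⟨w, hw, hw'⟩
      have := h.eq_of_mem hw hw' (by lia) (by lia)
      lia
  obtain ⟨x, hxL, hxR, hx⟩ := (hLconv hlt).helly hT (hRconv hlt') (h.convex_src b) hLR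
    (hRs hlt') (hLs hlt)
  obtain ⟨y, hyt, hyL, hyR⟩ := (h.convex_snk (a + 1)).helly hT (hLconv hlt) (hRconv hlt')
    (hLt hlt) hLR (hRt hlt')
  have hxsrc : ∃ k ∈ Set.Icc (a + 1) (b - 1), x ∈ s k := by
    obtain ⟨k, hk, hxk | hxk⟩ := hxL
    · exact ⟨k, hk, hxk⟩
    obtain ⟨l, hl, hxl | hxl⟩ := hxR
    · exact absurd hxl (snkL_srcR x k hk l hl hxk)
    · exact absurd ⟨x, snkL x k hk hxk hx, snkR x l hl hxl hx⟩ ht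
  have hysrc : ¬ ∃ k ∈ Set.Icc (a + 1) (b - 1), y ∈ s k := by
    rintro ⟨k, hk, hyk⟩
    obtain ⟨l, hl, hyl | hyl⟩ := hyR
    · exact hs ⟨y, srcR y l hl hyl hyt, srcL y k hk hyk hyt⟩
    · exact srcL_snkR y k hk l hl hyk hyl
  obtain ⟨p, hp⟩ := hT.connected.exists_isPath x y
  obtain ⟨d, hd, hd₁, hd₂⟩ :=
    p.exists_boundary_dart {w | ∃ k ∈ Set.Icc (a + 1) (b - 1), w ∈ s k} hxsrc hysrc
  have hfst := p.dart_fst_mem_support_of_mem_darts hd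
  have hsnd := p.dart_snd_mem_support_of_mem_darts hd
  obtain ⟨k, hk, hks | hkt⟩ := (h.chain hT (Or.inr rfl) (by lia)).2 _ _ d.adj
    (hLconv hlt x hxL y hyL p hp _ hfst) (hLconv hlt x hxL y hyL p hp _ hsnd)
  · exact hd₂ ⟨k, hk, hks.2⟩
  obtain ⟨k', hk', hk's⟩ := hd₁
  obtain ⟨l, hl, hl' | hl'⟩ := hRconv hlt' x hxR y hyR p hp _ hfst
  · exact snkL_srcR _ k hk l hl hkt.1 hl'
  · exact srcL_snkR _ k' hk' l hl hk's hl'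

theorem src_or_snk_meet (h : CyclicSystem T n s t) (hT : T.IsTree) :
    (∀ i, (s i ∩ s (i + 1)).Nonempty) ∨ ∀ i, (t i ∩ t (i + 1)).Nonempty := by
  by_contra! hcon
  obtain ⟨⟨a, ha⟩, ⟨b, hb⟩⟩ := hcon
  have hn := h.three_le
  have h₁ := Int.emod_nonneg (b - a - 1) (show n ≠ 0 by lia)
  have h₂ := Int.emod_lt_of_pos (b - a - 1) (show 0 < n by lia)
  have h₃ := Int.emod_add_mul_ediv (b - a - 1) n
  have hb' : ∀ i, t (i + (a + 1 + (b - a - 1) % n)) = t (i + b) := by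
    intro i
    rw [← (h.periodic_snk.int_mul ((b - a - 1) / n)) (i + (a + 1 + (b - a - 1) % n))]
    congr 1
    simp only [Int.cast_id]
    linarith
  refine h.not_disjoint_src_and_disjoint_snk hT (a := a) (b := a + 1 + (b - a - 1) % n)
    (by lia) (by lia) (by rw [ha]; simp) ?_
  have h0 := hb' 0
  have h1 := hb' 1
  rw [zero_add, zero_add] at h0
  rw [h0, add_comm _ 1, h1, add_comm 1 b, hb]
  simp

theorem le_ncard_treeLeaves_of_src_meet [Finite W] {m : ℕ} (h : CyclicSystem T m s t)
    (hT : T.IsTree) (hs : ∀ i, (s i ∩ s (i + 1)).Nonempty) : m ≤ (treeLeaves T).ncard := by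
  have hn := h.three_le
  have hx : ∀ i, ∃ x, x ∈ s (i - 1) ∧ x ∈ s i ∧ x ∈ t i := fun i => by
    have h₁ := hs (i - 1)
    have h₂ := h.meet_succ (i - 1)
    rw [sub_add_cancel] at h₁ h₂
    exact (h.convex_src (i - 1)).helly hT (h.convex_src i) (h.convex_snk i) h₁ (h.meet_self i) h₂
  choose x hx₁ hx₂ hx₃ using hx
  refine card_le_ncard_treeLeaves hT (by lia) (fun k : Fin m => x k) fun k =>
    ⟨{w | ∃ i ∈ Set.Icc ((k : ℤ) + 1) (k + m - 2), w ∈ s i},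
      (PathConvex.iUnion_Icc hT h.convex_src hs (by lia)).1, ?_, fun j hjk => ?_⟩
  · rintro ⟨i, ⟨h₁, h₂⟩, hi⟩
    have := h.eq_of_mem hi (hx₃ k) (by lia) (by lia)
    lia
  · have hj := j.2
    have hk := k.2
    rcases lt_or_gt_of_ne hjk with hlt | hlt
    · have hlt : (j : ℤ) < k := by exact_mod_cast hlt
      by_cases hlast : (k : ℤ) + 1 ≤ j + m - 1
      · refine ⟨j + m - 1, ⟨hlast, by lia⟩, ?_⟩
        rw [show (j : ℤ) + m - 1 = j - 1 + m by ring, h.periodic_src]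
        exact hx₁ j
      · refine ⟨j + m, ⟨by lia, by lia⟩, ?_⟩
        rw [h.periodic_src]
        exact hx₂ j
    · have hlt : (k : ℤ) < j := by exact_mod_cast hlt
      by_cases hlast : (j : ℤ) ≤ k + m - 2
      · exact ⟨j, ⟨by lia, hlast⟩, hx₂ j⟩
      · exact ⟨j - 1, ⟨by lia, by lia⟩, hx₁ j⟩

theorem le_ncard_treeLeaves [Finite W] {m : ℕ} (h : CyclicSystem T m s t) (hT : T.IsTree) :
    m ≤ (treeLeaves T).ncard := by
  rcases h.src_or_snk_meet hT with hs | ht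
  · exact h.le_ncard_treeLeaves_of_src_meet hT hs
  · refine h.reverse.le_ncard_treeLeaves_of_src_meet hT fun i => ?_
    have := ht (-(i + 1))
    rwa [Set.inter_comm, show -(i + 1) + 1 = -i by ring] at this

end CyclicSystem

end CyclicSystem

/-- The residue class of an integer, as an element of `Fin n`. -/
def residue (n : ℕ) (hn : 0 < n) (i : ℤ) : Fin n :=
  ⟨(i % n).toNat, by
    have := Int.emod_nonneg i (show (n : ℤ) ≠ 0 by lia)
    have := Int.emod_lt_of_pos i (show (0 : ℤ) < n by lia)
    lia⟩

theorem residue_coe (n : ℕ) (hn : 0 < n) (i : ℤ) : ((residue n hn i : ℕ) : ℤ) = i % n :=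
  Int.toNat_of_nonneg (Int.emod_nonneg i (by lia))

theorem CnRel_residue_iff (n : ℕ) (hn : 0 < n) (i j : ℤ) :
    CnRel n (residue n hn i) (residue n hn j) ↔ (n : ℤ) ∣ j - i ∨ (n : ℤ) ∣ j - i - 1 := by
  unfold CnRel
  refine or_congr ?_ ?_
  · rw [Fin.ext_iff, ← Int.natCast_inj, residue_coe, residue_coe, ← Int.modEq_iff_dvd]
    exact eq_comm
  · rw [← Int.natCast_inj, Int.natCast_mod, Nat.cast_succ, residue_coe, residue_coe,
      Int.emod_add_emod, sub_sub, ← Int.modEq_iff_dvd]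
    exact eq_comm

theorem SubtreeRep.le_ncard_treeLeaves {n : ℕ} (hn : 3 ≤ n) {W : Type} [Finite W]
    {T : SimpleGraph W} (hT : T.IsTree) (R : SubtreeRep (CnRel n) T) :
    n ≤ (treeLeaves T).ncard := by
  have hn' : 0 < n := by lia
  have hper : Function.Periodic (residue n hn') n := fun i => by simp [residue]
  have h : CyclicSystem T n (fun i => R.src (residue n hn' i))
      (fun i => R.snk (residue n hn' i)) :=
    { three_le := by exact_mod_cast hn
      convex_src := fun i => .of_induce_connected hT.isAcyclic (R.src_connected _)
      convex_snk := fun i => .of_induce_connected hT.isAcyclic (R.snk_connected _)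
      periodic_src := hper.comp R.src
      periodic_snk := hper.comp R.snk
      meet_iff := fun i j => by rw [← R.rep, CnRel_residue_iff] }
  exact h.le_ncard_treeLeaves hT

/-- The catch representation of `C_n` in the star with `n` leaves. -/
def starRep (n : ℕ) : SubtreeRep (CnRel n) (SimpleGraph.starGraph (none : Option (Fin n))) where
  src u := {w | w = none ∨ ∃ v, w = some v ∧ CnRel n u v}
  snk v := {some v}
  src_connected u := by
    have : Nonempty {w : Option (Fin n) | w = none ∨ ∃ v, w = some v ∧ CnRel n u v} :=
      ⟨⟨none, Or.inl rfl⟩⟩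
    refine SimpleGraph.Connected.of_isUniversal (v := ⟨none, Or.inl rfl⟩) fun w hw => ?_
    exact SimpleGraph.starGraph_center_adj fun h => hw (Subtype.ext h)
  snk_connected v := by simp
  rep u v := by
    constructor
    · exact fun h => ⟨some v, Or.inr ⟨v, rfl, h⟩, rfl⟩
    · rintro ⟨_, h | ⟨v', rfl, h⟩, hv⟩
      · simp [h] at hv
      · obtain rfl : v' = v := by simpa using hv
        exact h

theorem ncard_treeLeaves_starGraph {n : ℕ} (hn : 3 ≤ n) :
    (treeLeaves (SimpleGraph.starGraph (none : Option (Fin n)))).ncard = n := by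
  have hset : treeLeaves (SimpleGraph.starGraph (none : Option (Fin n))) = Set.range some := by
    ext w
    cases w with
    | none =>
      have hnbr : (SimpleGraph.starGraph (none : Option (Fin n))).neighborSet none =
          Set.range some := by
        ext w
        cases w <;> simp
      have : (Set.range (some : Fin n → Option (Fin n))).ncard = n := by
        rw [← Set.image_univ, Set.ncard_image_of_injective _ (Option.some_injective _),
          Set.ncard_univ, Nat.card_fin]
      simp only [treeLeaves, Set.mem_ofPred_eq, hnbr, this, Set.mem_range, reduceCtorEq,
        exists_false, iff_false]
      lia
    | some v =>
      have hnbr : (SimpleGraph.starGraph (none : Option (Fin n))).neighborSet (some v) =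
          {none} := by
        ext w
        cases w <;> simp
      simp [treeLeaves, hnbr]
  rw [hset, ← Set.image_univ, Set.ncard_image_of_injective _ (Option.some_injective _),
    Set.ncard_univ, Nat.card_fin]

theorem CnRel_pred_subset {n : ℕ} (hn : 3 ≤ n) {v w : Fin n}
    (h : {u | CnRel n u v} ⊆ {u | CnRel n u w}) : v = w := by
  have hv := v.2
  have hw := w.2
  have hsucc : ∀ i < n, i + 1 < n ∧ (i + 1) % n = i + 1 ∨ i + 1 = n ∧ (i + 1) % n = 0 := by
    intro i hi
    rcases eq_or_lt_of_le (show i + 1 ≤ n from hi) with h | h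
    · exact Or.inr ⟨h, by rw [h, Nat.mod_self]⟩
    · exact Or.inl ⟨h, Nat.mod_eq_of_lt h⟩
  obtain ⟨u, hu⟩ : ∃ u : Fin n, v.val = (u.val + 1) % n := by
    rcases Nat.eq_zero_or_pos v.val with h0 | hpos
    · exact ⟨⟨n - 1, by lia⟩, by simp [h0, Nat.sub_add_cancel (show 1 ≤ n by lia)]⟩
    · exact ⟨⟨v - 1, by lia⟩, by simp [Nat.sub_add_cancel hpos, Nat.mod_eq_of_lt hv]⟩
  have h₁ : CnRel n v w := h (Or.inl rfl)
  have h₂ : CnRel n u w := h (Or.inr hu)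
  unfold CnRel at h₁ h₂
  rw [Fin.ext_iff] at h₁ h₂ ⊢
  have := hsucc v hv
  have := hsucc u u.2
  lia

/-- For `n ≥ 3`, the directed cycle with loops `C_n` satisfies
`l(C_n) = l*(C_n) = w(P(C_n)) = n`; moreover its predecessor sets form an antichain
of size `n` (so `P(C_n)` has no unique maximal element, yet `l* = w(P)`). -/
theorem stmt_19 (n : ℕ) (hn : 3 ≤ n) :
    digLeafage (CnRel n) = n ∧ catchLeafage (CnRel n) = n ∧
    incWidth (CnRel n) = n ∧
    (Set.range (fun v => {u | CnRel n u v})).ncard = n ∧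
    IsAntichain (· ⊆ ·) (Set.range (fun v => {u | CnRel n u v})) := by
  have hcard : (Set.range (fun v => {u | CnRel n u v})).ncard = n := by
    rw [← Set.image_univ, Set.ncard_image_of_injective _
      (fun v w h => CnRel_pred_subset hn (le_of_eq h)), Set.ncard_univ, Nat.card_fin]
  have hanti : IsAntichain (· ⊆ ·) (Set.range (fun v => {u | CnRel n u v})) := by
    rintro _ ⟨v, rfl⟩ _ ⟨w, rfl⟩ hne hsub
    exact hne (by rw [CnRel_pred_subset hn hsub])
  have hfin := Set.finite_range (fun v => {u | CnRel n u v})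
  refine ⟨?_, ?_, ?_, hcard, hanti⟩
  · refine IsLeast.csInf_eq ⟨⟨_, inferInstance, _, SimpleGraph.isTree_starGraph none,
      ⟨starRep n⟩, ncard_treeLeaves_starGraph hn⟩, ?_⟩
    rintro k ⟨W, _, T, hT, ⟨R⟩, rfl⟩
    exact R.le_ncard_treeLeaves hn hT
  · refine IsLeast.csInf_eq ⟨⟨_, inferInstance, _, starRep n, SimpleGraph.isTree_starGraph none,
      fun v => ⟨some v, rfl⟩, ncard_treeLeaves_starGraph hn⟩, ?_⟩
    rintro k ⟨W, _, T, R, hT, -, rfl⟩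
    exact R.le_ncard_treeLeaves hn hT
  · refine IsGreatest.csSup_eq ⟨⟨hfin.toFinset, by simp, by simpa using hanti, ?_⟩, ?_⟩
    · rw [← Set.ncard_eq_toFinset_card _ hfin, hcard]
    · rintro k ⟨A, hA, -, rfl⟩
      rw [← Set.ncard_coe_finset]
      exact (Set.ncard_le_ncard hA hfin).trans_eq hcard
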